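/- arXiv:2511.10344 — 2 statements merged into one kernel-verified Lean document; each statement's English description precedes it below -/
import Mathlib

section
/- Fix a finite nonempty set of arms K with mean rewards μ_k ∈ [0,1] and gaps Δ_k, and suppose two agents i and j each have a gap-estimate sequence, (Δ^m_{i,k}, r^m_{i,k}) and (Δ^m_{j,k}, r^m_{j,k}) respectively, for the same μ. Then for every m ≥ 0 and every arm k: 1/4 ≤ Δ^m_{i,k} / Δ^m_{j,k} ≤ 4. -/
/-- A gap-estimate sequence for mean rewards `μ`. -/
structure GapEstSeq {K : Type*} [Fintype K] [Nonempty K] (μ : K → ℝ) where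
  D : ℕ → K → ℝ
  r : ℕ → K → ℝ
  hD0 : ∀ k, D 0 k = 1
  hr : ∀ (m : ℕ) (k : K), |r (m + 1) k - μ k| ≤ D m k / 8
  hD : ∀ (m : ℕ) (k : K),
    D (m + 1) k = max ((2 : ℝ) ^ (-((m : ℤ) + 1)))
      ((Finset.univ.sup' Finset.univ_nonempty (fun k' => r (m + 1) k' - D m k' / 8))
        - r (m + 1) k)

/-!
Write `Δ` for the true gap and `ε = 2⁻ᵐ`. The benchmark `r_*` never exceeds the optimal mean, so
unrolling the recursion gives `Dᵐ ≤ 8/7 Δ + ε`. At an optimal arm this leaves only the floor: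
`Dᵐ = ε` exactly. Hence `r_*` is also within `O(ε)` of the optimal mean, which gives
`6/7 Δ ≤ Dᵐ + ε` once `m ≥ 1`. Since `ε ≤ Dᵐ` for every agent, the true gap can be eliminated
between one agent's upper bound and the other agent's lower bound.
-/

/-- The suboptimality gap `Δ_k` of the arm `k`, used to compare the estimates of different agents.
An optimal arm is one of gap zero; the supremum is meant for bounded `μ`. -/
noncomputable def suboptimalityGap {K : Type*} (μ : K → ℝ) (k : K) : ℝ :=
  (⨆ j, μ j) - μ k

section SuboptimalityGap

variable {K : Type*} [Finite K] (μ : K → ℝ)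

theorem suboptimalityGap_nonneg (k : K) : 0 ≤ suboptimalityGap μ k :=
  sub_nonneg.2 (le_ciSup (Set.finite_range μ).bddAbove k)

theorem exists_suboptimalityGap_eq_zero [Nonempty K] : ∃ k, suboptimalityGap μ k = 0 :=
  (exists_eq_ciSup_of_finite (f := μ)).imp fun _ hk => sub_eq_zero.2 hk.symm

end SuboptimalityGap

namespace GapEstSeq

variable {K : Type*} [Fintype K] [Nonempty K] {μ : K → ℝ} (S : GapEstSeq μ)

/-- The benchmark `r_*` of epoch `m + 1` (not `m`): the largest lower confidence bound on a mean
reward, against which the arms are compared to form the estimates `S.D (m + 1)`. -/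
noncomputable def benchmark (m : ℕ) : ℝ :=
  Finset.univ.sup' Finset.univ_nonempty fun k => S.r (m + 1) k - S.D m k / 8

theorem D_succ (m : ℕ) (k : K) :
    S.D (m + 1) k = max ((1 / 2 : ℝ) ^ (m + 1)) (S.benchmark m - S.r (m + 1) k) := by
  have floor_eq : (2 : ℝ) ^ (-((m : ℤ) + 1)) = (1 / 2) ^ (m + 1) := by
    rw [zpow_neg, one_div, inv_pow]
    norm_cast
  rw [S.hD, floor_eq, benchmark]

theorem pow_le_D (m : ℕ) (k : K) : (1 / 2 : ℝ) ^ m ≤ S.D m k := by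
  cases m with
  | zero => simp [S.hD0]
  | succ m => exact (le_max_left _ _).trans_eq (S.D_succ m k).symm

theorem D_pos (m : ℕ) (k : K) : 0 < S.D m k :=
  (by positivity : (0 : ℝ) < (1 / 2) ^ m).trans_le (S.pow_le_D m k)

theorem benchmark_le_iSup (m : ℕ) : S.benchmark m ≤ ⨆ k, μ k := by
  refine Finset.sup'_le _ _ fun k _ => ?_
  have mean_le := le_ciSup (Set.finite_range μ).bddAbove k
  linarith [(abs_le.1 (S.hr m k)).2]

theorem benchmark_sub_r_le (m : ℕ) (k : K) :
    S.benchmark m - S.r (m + 1) k ≤ suboptimalityGap μ k + S.D m k / 8 := by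
  unfold suboptimalityGap
  linarith [S.benchmark_le_iSup m, (abs_le.1 (S.hr m k)).1]

theorem sub_D_div_four_le_benchmark (m : ℕ) (b : K) : μ b - S.D m b / 4 ≤ S.benchmark m := by
  have lower_le : S.r (m + 1) b - S.D m b / 8 ≤ S.benchmark m :=
    Finset.le_sup' (fun k => S.r (m + 1) k - S.D m k / 8) (Finset.mem_univ b)
  linarith [(abs_le.1 (S.hr m b)).1]

theorem D_le (m : ℕ) (k : K) :
    S.D m k ≤ 8 / 7 * suboptimalityGap μ k + (1 / 2) ^ m := by
  have gap_nonneg := suboptimalityGap_nonneg μ k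
  induction m with
  | zero => simpa [S.hD0] using gap_nonneg
  | succ m ih =>
    have floor_pos : (0 : ℝ) < (1 / 2) ^ m := by positivity
    rw [D_succ, pow_succ]
    refine max_le (by linarith) ?_
    linarith [S.benchmark_sub_r_le m k]

theorem D_eq_pow_of_suboptimalityGap_eq_zero {b : K} (hb : suboptimalityGap μ b = 0) (m : ℕ) :
    S.D m b = (1 / 2) ^ m :=
  le_antisymm (by simpa [hb] using S.D_le m b) (S.pow_le_D m b)

theorem suboptimalityGap_le_D_succ (m : ℕ) (k : K) :
    6 / 7 * suboptimalityGap μ k ≤ S.D (m + 1) k + (1 / 2) ^ (m + 1) := by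
  obtain ⟨b, hb⟩ := exists_suboptimalityGap_eq_zero μ
  have gap_eq : suboptimalityGap μ k = μ b - μ k := by
    rw [suboptimalityGap, sub_eq_zero.1 hb]
  have benchmark_ge := S.sub_D_div_four_le_benchmark m b
  rw [S.D_eq_pow_of_suboptimalityGap_eq_zero hb] at benchmark_ge
  have floor_pos : (0 : ℝ) < (1 / 2) ^ m := by positivity
  calc
    6 / 7 * suboptimalityGap μ k
      ≤ S.benchmark m - S.r (m + 1) k + (1 / 2) ^ (m + 1) := by
        rw [pow_succ]
        linarith [S.D_le m k, (abs_le.1 (S.hr m k)).2]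
    _ ≤ S.D (m + 1) k + (1 / 2) ^ (m + 1) := by
        rw [D_succ]
        gcongr
        exact le_max_right _ _

theorem D_le_four_mul_D (S T : GapEstSeq μ) (m : ℕ) (k : K) : S.D m k ≤ 4 * T.D m k := by
  cases m with
  | zero => norm_num [S.hD0, T.hD0]
  | succ m =>
    have floor_le := T.pow_le_D (m + 1) k
    calc
      S.D (m + 1) k ≤ 4 / 3 * (6 / 7 * suboptimalityGap μ k) + (1 / 2) ^ (m + 1) := by
        linarith [S.D_le (m + 1) k]
      _ ≤ 4 / 3 * (T.D (m + 1) k + (1 / 2) ^ (m + 1)) + (1 / 2) ^ (m + 1) := by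
        gcongr
        exact T.suboptimalityGap_le_D_succ m k
      _ ≤ 4 * T.D (m + 1) k := by linarith [T.D_pos (m + 1) k]

end GapEstSeq

theorem stmt_5_general {K : Type*} [Fintype K] [Nonempty K] {μ : K → ℝ}
    (Si Sj : GapEstSeq μ) (m : ℕ) (k : K) :
    1 / 4 ≤ Si.D m k / Sj.D m k ∧ Si.D m k / Sj.D m k ≤ 4 := by
  rw [le_div_iff₀ (Sj.D_pos m k), div_le_iff₀ (Sj.D_pos m k)]
  exact ⟨by linarith [Sj.D_le_four_mul_D Si m k], Si.D_le_four_mul_D Sj m k⟩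

/-- Estimated-gap-ratio lemma: gap estimates of two agents for the same arm and
epoch have ratio in `[1/4, 4]`. -/
theorem stmt_5 {K : Type*} [Fintype K] [Nonempty K]
    (μ : K → ℝ) (hμ : ∀ k, μ k ∈ Set.Icc (0 : ℝ) 1)
    (kstar : K) (hks : ∀ k, μ k ≤ μ kstar)
    (Si Sj : GapEstSeq μ) (m : ℕ) (k : K) :
    1 / 4 ≤ Si.D m k / Sj.D m k ∧ Si.D m k / Sj.D m k ≤ 4 :=
  stmt_5_general Si Sj m k
end

section
/- Let a ≥ 1 and b > 0 be reals, define N_m = ⌈a·4^{m−1}⌉ for m ≥ 1, let C_1, C_2, … be nonnegative reals, define ρ_0 = 0 and ρ_m = Σ_{s=1}^m C_s / (8^{m−s}·b·N_s). Suppose for every m ∈ {1,…,M} there are a finite set Z_m of arms, nonnegative reals ñ^m_k for k ∈ Z_m with Σ_{k∈Z_m} ñ^m_k ≤ N_m, and nonnegative reals Δ_k with Δ_k ≤ 72·ρ_{m−1} for every k ∈ Z_m. Then Σ_{m=1}^M Σ_{k∈Z_m} Δ_k · ñ^m_k ≤ 906 · (Σ_{s=1}^M C_s) / b. -/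
/-!
Each further epoch divides the weight of the corruption `C s` in the offset rate `ρ` by `r`, while
the epoch length `N` grows by a factor of at most `q < r`. Hence the potential
`∑ i ∈ Icc 1 m, N i * ρ (i - 1) + r / (r - q) * (N (m + 1) * ρ m)` increases by at most
`q * r / (r - q) * C m / b` in epoch `m`. For `q = 4`, `r = 8` and gaps of at most `72` times the
rate, the constant is `72 * 8 = 576 ≤ 906`.
-/

open Finset

section OrderedSemiring

variable {K R : Type*} [Semiring R] [LinearOrder R] [IsStrictOrderedRing R]

lemma natCeil_natCast_mul_le [FloorSemiring R] (q : ℕ) (x : R) : ⌈q * x⌉₊ ≤ q * ⌈x⌉₊ :=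
  Nat.ceil_le.mpr <| by
    rw [Nat.cast_mul]
    exact mul_le_mul_of_nonneg_left (Nat.le_ceil x) q.cast_nonneg

lemma sum_mul_le_mul_of_forall_le {Z : Finset K} {f w : K → R} {B W : R} (hB : 0 ≤ B)
    (hw : ∀ k ∈ Z, 0 ≤ w k) (hW : ∑ k ∈ Z, w k ≤ W) (hf : ∀ k ∈ Z, f k ≤ B) :
    ∑ k ∈ Z, f k * w k ≤ B * W :=
  calc ∑ k ∈ Z, f k * w k ≤ ∑ k ∈ Z, B * w k :=
        sum_le_sum fun k hk ↦ mul_le_mul_of_nonneg_right (hf k hk) (hw k hk)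
    _ = B * ∑ k ∈ Z, w k := (mul_sum _ _ _).symm
    _ ≤ B * W := mul_le_mul_of_nonneg_left hW hB

end OrderedSemiring

section DiscountedSum

variable {K 𝕜 : Type*} [Field 𝕜]

/-- The sum `x 1 / r ^ (m - 1) + ⋯ + x (m - 1) / r + x m`, in which a term loses a factor `r` with
each further epoch. The offset rate `ρ_m` of the algorithm is the case `x s = C s / (b * N s)`. -/
def discountedSum (r : 𝕜) (x : ℕ → 𝕜) (m : ℕ) : 𝕜 :=
  ∑ s ∈ Icc 1 m, x s / r ^ (m - s)

@[simp]
lemma discountedSum_zero (r : 𝕜) (x : ℕ → 𝕜) : discountedSum r x 0 = 0 := by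
  simp [discountedSum]

lemma discountedSum_succ (r : 𝕜) (x : ℕ → 𝕜) (m : ℕ) :
    discountedSum r x (m + 1) = discountedSum r x m / r + x (m + 1) := by
  have hdiscount : ∀ s ∈ Icc 1 m, x s / r ^ (m + 1 - s) = x s / r ^ (m - s) / r := by
    intro s hs
    rw [Nat.sub_add_comm (mem_Icc.mp hs).2, pow_succ, div_div]
  rw [discountedSum, sum_Icc_succ_top (by lia), sum_congr rfl hdiscount, ← sum_div]
  simp [discountedSum]

variable [LinearOrder 𝕜] [IsStrictOrderedRing 𝕜]

lemma discountedSum_nonneg {r : 𝕜} {x : ℕ → 𝕜} (hr : 0 ≤ r) (hx : ∀ s, 1 ≤ s → 0 ≤ x s) (m : ℕ) :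
    0 ≤ discountedSum r x m :=
  sum_nonneg fun s hs ↦ div_nonneg (hx s (mem_Icc.mp hs).1) (pow_nonneg hr _)

lemma sum_mul_discountedSum_add_le {q r : 𝕜} {N x : ℕ → 𝕜} (hr : 0 < r) (hqr : q < r)
    (hN : ∀ m, 1 ≤ m → N (m + 1) ≤ q * N m) (hx : ∀ s, 1 ≤ s → 0 ≤ x s) (M : ℕ) :
    ∑ m ∈ Icc 1 M, N m * discountedSum r x (m - 1)
        + r / (r - q) * (N (M + 1) * discountedSum r x M) ≤
      q * r / (r - q) * ∑ s ∈ Icc 1 M, N s * x s := by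
  have hgap : 0 < r - q := sub_pos.mpr hqr
  induction M with
  | zero => simp
  | succ M ih =>
    have hgrowth : N (M + 2) * discountedSum r x (M + 1) ≤
        q * N (M + 1) * discountedSum r x (M + 1) :=
      mul_le_mul_of_nonneg_right (hN (M + 1) (by lia)) (discountedSum_nonneg hr.le hx _)
    -- The weight `κ = r / (r - q)` is the solution of `1 + κ * q / r = κ`.
    have hbalance : N (M + 1) * discountedSum r x M
          + r / (r - q) * (q * N (M + 1) * discountedSum r x (M + 1)) =
        r / (r - q) * (N (M + 1) * discountedSum r x M)
          + q * r / (r - q) * (N (M + 1) * x (M + 1)) := by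
      rw [discountedSum_succ]
      field_simp
      ring
    have hpotential := mul_le_mul_of_nonneg_left hgrowth (div_nonneg hr.le hgap.le)
    rw [sum_Icc_succ_top (by lia), sum_Icc_succ_top (by lia), mul_add, Nat.add_sub_cancel]
    linarith

lemma sum_mul_discountedSum_le {q r : 𝕜} {N x : ℕ → 𝕜} (hr : 0 < r) (hqr : q < r)
    (hN0 : ∀ m, 1 ≤ m → 0 ≤ N m) (hN : ∀ m, 1 ≤ m → N (m + 1) ≤ q * N m)
    (hx : ∀ s, 1 ≤ s → 0 ≤ x s) (M : ℕ) :
    ∑ m ∈ Icc 1 M, N m * discountedSum r x (m - 1) ≤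
      q * r / (r - q) * ∑ s ∈ Icc 1 M, N s * x s := by
  have hpotential : 0 ≤ r / (r - q) * (N (M + 1) * discountedSum r x M) :=
    mul_nonneg (div_nonneg hr.le (sub_pos.mpr hqr).le)
      (mul_nonneg (hN0 _ (by lia)) (discountedSum_nonneg hr.le hx M))
  exact (le_add_of_nonneg_right hpotential).trans (sum_mul_discountedSum_add_le hr hqr hN hx M)

theorem stmt_11_general {q r b c : 𝕜} (hqr : q < r) (hb : 0 < b) (hc : 0 ≤ c)
    {N : ℕ → 𝕜} (hN0 : ∀ m, 1 ≤ m → 0 < N m) (hN : ∀ m, 1 ≤ m → N (m + 1) ≤ q * N m)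
    {C : ℕ → 𝕜} (hC : ∀ s, 1 ≤ s → 0 ≤ C s) {M : ℕ} {Z : ℕ → Finset K} {n Δ : ℕ → K → 𝕜}
    (hn : ∀ m ∈ Icc 1 M, ∀ k ∈ Z m, 0 ≤ n m k) (hsum : ∀ m ∈ Icc 1 M, ∑ k ∈ Z m, n m k ≤ N m)
    (hΔ : ∀ m ∈ Icc 1 M, ∀ k ∈ Z m,
      Δ m k ≤ c * discountedSum r (fun s ↦ C s / (b * N s)) (m - 1)) :
    ∑ m ∈ Icc 1 M, ∑ k ∈ Z m, Δ m k * n m k ≤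
      c * (q * r / (r - q)) * (∑ s ∈ Icc 1 M, C s) / b := by
  set x : ℕ → 𝕜 := fun s ↦ C s / (b * N s) with hx_def
  have hq : 0 < q :=
    pos_of_mul_pos_left ((hN0 2 one_le_two).trans_le (hN 1 le_rfl)) (hN0 1 le_rfl).le
  have hr : 0 < r := hq.trans hqr
  have hx : ∀ s, 1 ≤ s → 0 ≤ x s := fun s hs ↦ div_nonneg (hC s hs) (mul_pos hb (hN0 s hs)).le
  have hNx : ∀ s ∈ Icc 1 M, N s * x s = C s / b := fun s hs ↦ by
    have := (hN0 s (mem_Icc.mp hs).1).ne'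
    simp only [hx_def]
    field_simp
  calc ∑ m ∈ Icc 1 M, ∑ k ∈ Z m, Δ m k * n m k
      ≤ ∑ m ∈ Icc 1 M, c * discountedSum r x (m - 1) * N m :=
        sum_le_sum fun m hm ↦ sum_mul_le_mul_of_forall_le
          (mul_nonneg hc (discountedSum_nonneg hr.le hx _)) (hn m hm) (hsum m hm) (hΔ m hm)
    _ = c * ∑ m ∈ Icc 1 M, N m * discountedSum r x (m - 1) := by
        simp only [mul_sum, mul_assoc, mul_comm (N _)]
    _ ≤ c * (q * r / (r - q) * ∑ s ∈ Icc 1 M, N s * x s) :=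
        mul_le_mul_of_nonneg_left
          (sum_mul_discountedSum_le hr hqr (fun m hm ↦ (hN0 m hm).le) hN hx M) hc
    _ = c * (q * r / (r - q)) * (∑ s ∈ Icc 1 M, C s) / b := by
        rw [sum_congr rfl hNx, ← sum_div, ← mul_assoc, ← mul_div_assoc]

end DiscountedSum

/-- Case-1 regret bound under adversarial corruption with `β > α`: arms whose
gap is dominated by the discounted offset rate (`Δ_k ≤ 72 ρ_{m−1}`) contribute
total regret at most `906 (Σ C_s) / b`. -/
theorem stmt_11 {K : Type*} (a b : ℝ) (ha : 1 ≤ a) (hb : 0 < b)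
    (N : ℕ → ℕ) (hN : ∀ m, 1 ≤ m → N m = ⌈a * 4 ^ (m - 1)⌉₊)
    (C : ℕ → ℝ) (hC : ∀ s, 0 ≤ C s)
    (ρ : ℕ → ℝ) (hρ0 : ρ 0 = 0)
    (hρ : ∀ m, 1 ≤ m →
      ρ m = ∑ s ∈ Finset.Icc 1 m, C s / (8 ^ (m - s) * b * (N s : ℝ)))
    (M : ℕ) (Z : ℕ → Finset K) (nt : ℕ → K → ℝ) (Δ : K → ℝ)
    (hnt : ∀ m ∈ Finset.Icc 1 M, ∀ k ∈ Z m, 0 ≤ nt m k)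
    (hΔ0 : ∀ k, 0 ≤ Δ k)
    (hsum : ∀ m ∈ Finset.Icc 1 M, ∑ k ∈ Z m, nt m k ≤ (N m : ℝ))
    (hΔ : ∀ m ∈ Finset.Icc 1 M, ∀ k ∈ Z m, Δ k ≤ 72 * ρ (m - 1)) :
    ∑ m ∈ Finset.Icc 1 M, ∑ k ∈ Z m, Δ k * nt m k ≤
      906 * (∑ s ∈ Finset.Icc 1 M, C s) / b := by
  have hN0 (m : ℕ) (hm : 1 ≤ m) : (0 : ℝ) < N m := by
    rw [hN m hm, Nat.cast_pos, Nat.ceil_pos]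
    positivity
  have hN4 (m : ℕ) (hm : 1 ≤ m) : (N (m + 1) : ℝ) ≤ 4 * N m := by
    have hceil := natCeil_natCast_mul_le 4 (a * 4 ^ (m - 1))
    rw [Nat.cast_ofNat, mul_left_comm, ← pow_succ', Nat.sub_add_cancel hm] at hceil
    rw [hN m hm, hN (m + 1) (by lia), Nat.add_sub_cancel]
    exact_mod_cast hceil
  obtain rfl : ρ = discountedSum 8 fun s ↦ C s / (b * N s) := by
    ext m
    rcases m.eq_zero_or_pos with rfl | hm
    · rw [hρ0, discountedSum_zero]
    · rw [hρ m hm]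
      exact sum_congr rfl fun s _ ↦ by ring
  calc ∑ m ∈ Icc 1 M, ∑ k ∈ Z m, Δ k * nt m k
      ≤ 72 * (4 * 8 / (8 - 4)) * (∑ s ∈ Icc 1 M, C s) / b :=
        stmt_11_general (by norm_num) hb (by norm_num) hN0 hN4 (fun s _ ↦ hC s) hnt hsum hΔ
    _ ≤ 906 * (∑ s ∈ Icc 1 M, C s) / b := by
        have hCsum : 0 ≤ ∑ s ∈ Icc 1 M, C s := sum_nonneg fun s _ ↦ hC s
        gcongr
        norm_num
end
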